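/- Let A = [a_1, ..., a_n] ∈ ℝ^{m×n} be nonzero and let (B, N) be the canonical partition of {1,...,n}, i.e., B ∪ N = {1,...,n}, B ∩ N = ∅, there exists x_B > 0 with A_B x_B = 0, and there exists y ∈ ℝ^m with A_N^T y > 0 and A_B^T y = 0. If N = ∅, then L := span(A_B) ≠ {0} and φ(A) ≥ |ρ_B(A)|, where ρ_B(A) := max_{z ∈ L, ‖z‖₂=1} min_{i ∈ B} ⟨a_i, z⟩. -/

import Mathlib

open scoped RealInnerProductSpace BigOperators

/-- `comb a x = A x`, the combination `∑ i, x i • a i` of the columns `a i` of `A`. -/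
noncomputable def comb {m n : ℕ} (a : Fin n → EuclideanSpace ℝ (Fin m)) (x : Fin n → ℝ) :
    EuclideanSpace ℝ (Fin m) := ∑ i, x i • a i

/-- `φ(A, x) = sup {λ > 0 : ∃ u v ∈ Δ_{n-1}, S(u) ⊆ S(x), Au - Av = (λ/‖Ax‖) Ax}`. -/
noncomputable def phiAt {m n : ℕ} (a : Fin n → EuclideanSpace ℝ (Fin m))
    (x : Fin n → ℝ) : ℝ :=
  sSup {lam : ℝ | 0 < lam ∧ ∃ u ∈ stdSimplex ℝ (Fin n), ∃ v ∈ stdSimplex ℝ (Fin n),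
    (∀ i, 0 < u i → 0 < x i) ∧
    comb a u - comb a v = (lam / ‖comb a x‖) • comb a x}

/-- The restricted width `φ(A) = min {φ(A, x) : x ≥ 0, Ax ≠ 0}`. -/
noncomputable def phi {m n : ℕ} (a : Fin n → EuclideanSpace ℝ (Fin m)) : ℝ :=
  sInf {t : ℝ | ∃ x : Fin n → ℝ, (∀ i, 0 ≤ x i) ∧ comb a x ≠ 0 ∧ t = phiAt a x}

theorem comb_cont {m n : ℕ} (a : Fin n → EuclideanSpace ℝ (Fin m)) : Continuous (comb a) := by
  unfold comb
  fun_prop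

theorem comb_smul {m n : ℕ} (a : Fin n → EuclideanSpace ℝ (Fin m)) (c : ℝ) (x : Fin n → ℝ) :
    comb a (c • x) = c • comb a x := by
  simp [comb, Finset.smul_sum, smul_smul]

theorem comb_lin {m n : ℕ} (a : Fin n → EuclideanSpace ℝ (Fin m)) : IsLinearMap ℝ (comb a) where
  map_add x y := by simp [comb, add_smul, Finset.sum_add_distrib]
  map_smul c x := comb_smul a c x

theorem comb_single {m n : ℕ} (a : Fin n → EuclideanSpace ℝ (Fin m)) (i : Fin n) :
    comb a (Pi.single i 1) = a i := by
  unfold comb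
  rw [Finset.sum_eq_single i]
  · simp
  · intro j _ hj
    simp [hj]
  · simp

theorem comb_mem {m n : ℕ} (a : Fin n → EuclideanSpace ℝ (Fin m)) (x : Fin n → ℝ) :
    comb a x ∈ Submodule.span ℝ (Set.range a) :=
  Submodule.sum_mem _ fun i _ => Submodule.smul_mem _ _ (Submodule.subset_span ⟨i, rfl⟩)

theorem ball_in_hull {m n : ℕ} (a : Fin n → EuclideanSpace ℝ (Fin m)) (hn : 0 < n) (r : ℝ)
    (h : ∀ z ∈ Submodule.span ℝ (Set.range a), ‖z‖ = 1 → ∃ i, ⟪a i, z⟫ ≤ -r)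
    (w : EuclideanSpace ℝ (Fin m)) (hw : w ∈ Submodule.span ℝ (Set.range a)) (hwr : ‖w‖ ≤ r) :
    ∃ v ∈ stdSimplex ℝ (Fin n), comb a v = w := by
  by_contra hcon
  have hK : IsCompact (comb a '' stdSimplex ℝ (Fin n)) :=
    (isCompact_stdSimplex ℝ (Fin n)).image (comb_cont a)
  have hC : Convex ℝ (comb a '' stdSimplex ℝ (Fin n)) :=
    (convex_stdSimplex ℝ (Fin n)).is_linear_image (comb_lin a)
  obtain ⟨f, c, hf1, hf2⟩ := geometric_hahn_banach_point_closed hC hK.isClosed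
    (x := w) (by rintro ⟨v, hv, e⟩; exact hcon ⟨v, hv, e⟩)
  set L := Submodule.span ℝ (Set.range a) with hL
  set y := (InnerProductSpace.toDual ℝ (EuclideanSpace ℝ (Fin m))).symm f with hy
  have hfy : ∀ x, f x = ⟪y, x⟫ := fun x => by
    rw [hy, InnerProductSpace.toDual_symm_apply]
  set z := L.starProjection y with hz
  have hzL : z ∈ L := L.starProjection_apply_mem y
  have hfz : ∀ x ∈ L, f x = ⟪z, x⟫ := fun x hx => by
    rw [hfy, hz, Submodule.inner_starProjection_left_eq_right,
      Submodule.starProjection_eq_self_iff.2 hx]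
  have ha : ∀ i, a i ∈ L := fun i => Submodule.subset_span ⟨i, rfl⟩
  have hlt : ∀ i, ⟪z, w⟫ < ⟪z, a i⟫ := fun i => by
    rw [← hfz _ hw, ← hfz _ (ha i)]
    exact hf1.trans (hf2 _ ⟨_, single_mem_stdSimplex ℝ i, comb_single a i⟩)
  have hz0 : z ≠ 0 := by
    intro h0
    have := hlt ⟨0, hn⟩
    simp [h0] at this
  have hzn : 0 < ‖z‖ := norm_pos_iff.2 hz0
  obtain ⟨i, hi⟩ := h (‖z‖⁻¹ • z) (L.smul_mem _ hzL) (by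
    rw [norm_smul, norm_inv, norm_norm, inv_mul_cancel₀ hzn.ne'])
  rw [inner_smul_right, inv_mul_le_iff₀ hzn, real_inner_comm] at hi
  have h1 := hlt i
  have h2 := neg_le_of_abs_le (abs_real_inner_le_norm z w)
  nlinarith [mul_le_mul_of_nonneg_left hwr hzn.le]

theorem phiAt_ge {m n : ℕ} (a : Fin n → EuclideanSpace ℝ (Fin m)) (hn : 0 < n) (r : ℝ)
    (hr : 0 ≤ r)
    (h : ∀ z ∈ Submodule.span ℝ (Set.range a), ‖z‖ = 1 → ∃ i, ⟪a i, z⟫ ≤ -r)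
    (x : Fin n → ℝ) (hx : ∀ i, 0 ≤ x i) (hx0 : comb a x ≠ 0) : r ≤ phiAt a x := by
  have hnx : 0 < ‖comb a x‖ := norm_pos_iff.2 hx0
  set s := ∑ i, x i with hs
  have hspos : 0 < s := by
    rcases (Finset.sum_nonneg fun i _ => hx i : 0 ≤ s).eq_or_lt with h0 | h0
    · exfalso
      apply hx0
      have := (Finset.sum_eq_zero_iff_of_nonneg fun i _ => hx i).1 h0.symm
      unfold comb
      exact Finset.sum_eq_zero fun i hi => by rw [this i hi, zero_smul]
    · exact h0
  obtain ⟨v, hv, hve⟩ := ball_in_hull a hn r h (-(r / ‖comb a x‖) • comb a x)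
    (Submodule.smul_mem _ _ (comb_mem a x)) (by
      rw [norm_smul, norm_neg, norm_div, norm_norm, div_mul_cancel₀ _ hnx.ne',
        Real.norm_of_nonneg hr])
  have hbd : BddAbove {lam : ℝ | 0 < lam ∧ ∃ u ∈ stdSimplex ℝ (Fin n),
      ∃ v ∈ stdSimplex ℝ (Fin n), (∀ i, 0 < u i → 0 < x i) ∧
      comb a u - comb a v = (lam / ‖comb a x‖) • comb a x} := by
    obtain ⟨C, hC⟩ := ((isCompact_stdSimplex ℝ (Fin n)).image (comb_cont a)).isBounded.exists_norm_le
    refine ⟨C + C, ?_⟩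
    rintro lam ⟨hl, u, hu, v, hv, -, he⟩
    have := congrArg norm he
    rw [norm_smul, norm_div, norm_norm, div_mul_cancel₀ _ hnx.ne',
        Real.norm_of_nonneg hl.le] at this
    rw [← this]
    exact (norm_sub_le _ _).trans (add_le_add (hC _ ⟨u, hu, rfl⟩) (hC _ ⟨v, hv, rfl⟩))
  have ht : 0 < s⁻¹ * ‖comb a x‖ := by positivity
  refine le_trans (by linarith : r ≤ r + s⁻¹ * ‖comb a x‖) (le_csSup hbd ?_)
  refine ⟨by linarith, s⁻¹ • x, ⟨fun i => ?_, ?_⟩, v, hv, fun i hi => ?_, ?_⟩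
  · exact mul_nonneg (inv_nonneg.2 hspos.le) (hx i)
  · simp only [Pi.smul_apply, smul_eq_mul, ← Finset.mul_sum]
    exact inv_mul_cancel₀ hspos.ne'
  · exact pos_of_mul_pos_right hi (inv_nonneg.2 hspos.le)
  · rw [hve, comb_smul, ← sub_smul]
    congr 1
    field_simp
    ring

/-- for the canonical partition `(B, N)` of a nonzero matrix `A`, if
`N = ∅` then `L := span(A_B) ≠ {0}` and `φ(A) ≥ |ρ_B(A)|`, where
`ρ_B(A) = max_{z ∈ L, ‖z‖=1} min_{i ∈ B} ⟪a i, z⟫`. -/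
theorem stmt15 (m n : ℕ) (hn : 0 < n) (a : Fin n → EuclideanSpace ℝ (Fin m))
    (hA : ∃ i, a i ≠ 0) (B N : Finset (Fin n))
    (hBN : B ∪ N = Finset.univ) (hdisj : B ∩ N = ∅)
    (hB : ∃ xB : Fin n → ℝ, (∀ i ∈ B, 0 < xB i) ∧ ∑ i ∈ B, xB i • a i = 0)
    (hN : ∃ y : EuclideanSpace ℝ (Fin m),
      (∀ i ∈ N, 0 < ⟪a i, y⟫) ∧ ∀ i ∈ B, ⟪a i, y⟫ = 0)
    (hNempty : N = ∅) (ρB : ℝ)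
    (hρB : IsGreatest
      {t : ℝ | ∃ z : EuclideanSpace ℝ (Fin m),
        z ∈ Submodule.span ℝ (a '' (B : Set (Fin n))) ∧ ‖z‖ = 1 ∧
        t = sInf {s : ℝ | ∃ i ∈ B, s = ⟪a i, z⟫}} ρB) :
    Submodule.span ℝ (a '' (B : Set (Fin n))) ≠ ⊥ ∧ |ρB| ≤ phi a := by
  have hBu : B = Finset.univ := by rw [← hBN, hNempty, Finset.union_empty]
  subst hBu
  simp only [Finset.coe_univ, Set.image_univ, Finset.mem_univ, true_and, forall_true_left]
    at hρB hB ⊢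
  obtain ⟨xB, hxB, hx0⟩ := hB
  obtain ⟨j, hj⟩ := hA
  refine ⟨fun hbot => hj ?_, ?_⟩
  · have : a j ∈ Submodule.span ℝ (Set.range a) := Submodule.subset_span ⟨j, rfl⟩
    rwa [hbot, Submodule.mem_bot] at this
  have hset : ∀ z, {s : ℝ | ∃ i, s = ⟪a i, z⟫} = Set.range fun i => ⟪a i, z⟫ := fun z => by
    ext s
    simp [eq_comm]
  have : Nonempty (Fin n) := ⟨j⟩
  have hρ : ρB ≤ 0 := by
    obtain ⟨z, -, -, hz⟩ := hρB.1
    by_contra! hpos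
    have hge : ∀ i, ρB ≤ ⟪a i, z⟫ := fun i => by
      rw [hz, hset]
      exact csInf_le (Set.finite_range _).bddBelow ⟨i, rfl⟩
    have h0 : ∑ i, xB i * ⟪a i, z⟫ = 0 := by
      have := congrArg (fun w => ⟪w, z⟫) hx0
      simpa [sum_inner, inner_smul_left] using this
    have h1 : 0 < ∑ i, xB i * ⟪a i, z⟫ :=
      Finset.sum_pos (fun i _ => mul_pos (hxB i) (hpos.trans_le (hge i))) Finset.univ_nonempty
    linarith
  rw [abs_of_nonpos hρ]
  unfold phi
  refine le_csInf ⟨_, Pi.single j 1, fun i => ?_, ?_, rfl⟩ ?_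
  · exact (single_mem_stdSimplex ℝ j).1 i
  · rwa [comb_single]
  rintro t ⟨x, hx, hx0, rfl⟩
  refine phiAt_ge a hn _ (by linarith) (fun z hz hz1 => ?_) x hx hx0
  have h1 := hρB.2 ⟨z, hz, hz1, rfl⟩
  rw [hset] at h1
  obtain ⟨i, hi⟩ := (Set.range_nonempty fun i => ⟪a i, z⟫).csInf_mem (Set.finite_range _)
  refine ⟨i, ?_⟩
  simp only at hi
  rw [hi]
  linarith
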